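/- Let S be a semioval of size q − 1 + a in PG(2,q) with an a-secant ℓ, let N_ℓ be the nucleus of ℓ, let L denote the set of tangents to S through the points of S∖ℓ, and let B = {N_ℓ} ∪ (S Δ ℓ). Then one of the following holds. (1) S is an oval. (2) L is contained in a pencil of lines with carrier C; then C ∈ ℓ and B∖{C} is a blocking set of Rédei type with Rédei line ℓ. (3) L is not contained in any pencil; then B is a minimal blocking set of Rédei type with Rédei line ℓ, and moreover: (a) p does not divide a; (b) for every R ∈ S∖ℓ the line RN_ℓ is not a tangent to S; (c) if R₁, R₂ ∈ S∖ℓ and there is a point T ∈ ℓ such that R_iT meets S ∪ {N_ℓ} in at least three points for i = 1, 2, then |R₁M ∩ (S ∪ {N_ℓ})| = |R₂M ∩ (S ∪ {N_ℓ})| for every M ∈ ℓ; (d) if R₁, R₂ ∈ S∖ℓ and the tangents to S at these two points meet each other on the line ℓ, then |R₁M ∩ (S ∪ {N_ℓ})| = |R₂M ∩ (S ∪ {N_ℓ})| for every M ∈ ℓ. -/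

import Mathlib

/-! Common setup: the Desarguesian projective plane `PG(2,q)` over a finite field `F = GF(q)`.
Points are the projective points of `F³`; lines are the 2-dimensional linear subspaces of `F³`,
with incidence given by containment. -/

/-- Points of `PG(2,F)`. -/
abbrev PGPoint (F : Type*) [Field F] := Projectivization F (Fin 3 → F)

/-- Lines of `PG(2,F)`: the 2-dimensional linear subspaces of `F³`. -/
abbrev PGLine (F : Type*) [Field F] := {W : Submodule F (Fin 3 → F) // Module.finrank F W = 2}

/-- Incidence between a point and a line of `PG(2,F)`. -/
def pgMem {F : Type*} [Field F] (P : PGPoint F) (L : PGLine F) : Prop :=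
  P.submodule ≤ L.val

/-- The number of points of the point set `B` lying on the line `L`;
`L` is a *`k`-secant* of `B` if `nsec B L = k`, a *tangent* if `k = 1`,
a *bisecant* if `k = 2` and a *trisecant* if `k = 3`. -/
noncomputable def nsec {F : Type*} [Field F] (B : Set (PGPoint F)) (L : PGLine F) : ℕ :=
  {P ∈ B | pgMem P L}.ncard

/-- A blocking set: a point set meeting every line. -/
def isBlocking {F : Type*} [Field F] (B : Set (PGPoint F)) : Prop :=
  ∀ L : PGLine F, ∃ P ∈ B, pgMem P L

/-- A minimal blocking set: every point is essential. -/
def isMinimalBlocking {F : Type*} [Field F] (B : Set (PGPoint F)) : Prop :=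
  isBlocking B ∧ ∀ P ∈ B, ¬ isBlocking (B \ {P})

/-- `B` is a blocking set of Rédei type with Rédei line `ℓ`: a blocking set of size
`q + N ≤ 2q` such that `ℓ` meets `B` in exactly `N = |B| − q` points. -/
def isRedeiWithLine {F : Type*} [Field F] (q : ℕ) (B : Set (PGPoint F)) (ℓ : PGLine F) : Prop :=
  isBlocking B ∧ B.ncard ≤ 2 * q ∧ nsec B ℓ + q = B.ncard

/-- A semioval: through each of its points there passes exactly one tangent. -/
def isSemioval {F : Type*} [Field F] (S : Set (PGPoint F)) : Prop :=
  ∀ P ∈ S, ∃! t : PGLine F, pgMem P t ∧ nsec S t = 1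

open Polynomial Finset in
/-- The monic polynomial whose roots are the slopes of the secants through the point of abscissa `x`
of the graph of `f`, counted with multiplicity. -/
noncomputable def slopePoly {F : Type*} [Field F] [Fintype F] [DecidableEq F]
    (f : F → F) (x : F) : F[X] :=
  ∏ y ∈ univ.erase x, (X - C ((f y - f x) / (y - x)))

/-- Among the lines through the point of abscissa `x` of the graph of `f` whose slope is not
in `A`, the one of slope `m` is the only one that meets the graph in no further point, except
possibly in the point of abscissa `n`. -/
structure IsTangentDir {F : Type*} [Field F] (f : F → F) (n : F) (A : Finset F) (x m : F) :
    Prop where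
  notMem : m ∉ A
  ne_of_ne : ∀ y, y ≠ x → y ≠ n → f y - m * y ≠ f x - m * x
  exists_of_ne : ∀ d, d ∉ A → d ≠ m → ∃ y, y ≠ x ∧ f y - d * y = f x - d * x

section SlopePoly

open Polynomial Finset

variable {F : Type*} [Field F]

lemma slope_eq_iff (f : F → F) {x y d : F} (h : y ≠ x) :
    (f y - f x) / (y - x) = d ↔ f y - d * y = f x - d * x := by
  rw [div_eq_iff (sub_ne_zero.2 h)]
  constructor <;> intro h <;> linear_combination h

lemma eq_of_eval_eq [Fintype F] {G H : F[X]} (hG : G.degree < Fintype.card F)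
    (hH : H.degree < Fintype.card F) (h : ∀ y, G.eval y = H.eval y) : G = H :=
  eq_of_degrees_lt_of_eval_finset_eq univ hG hH fun y _ => h y

lemma derivative_eval_eq_zero_of_two_le_count [DecidableEq F] {G : F[X]} {t : F}
    (h : 2 ≤ G.roots.count t) : (derivative G).eval t = 0 := by
  by_cases hG : G = 0
  · simp [hG]
  · exact ((one_lt_rootMultiplicity_iff_isRoot hG).1 (by rwa [count_roots] at h)).2

variable [Fintype F] [DecidableEq F]

lemma slopePoly_monic (f : F → F) (x : F) : (slopePoly f x).Monic :=
  monic_prod_of_monic _ _ fun _ _ => monic_X_sub_C _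

lemma slopePoly_natDegree (f : F → F) (x : F) :
    (slopePoly f x).natDegree = Fintype.card F - 1 := by
  rw [slopePoly, natDegree_prod_of_monic _ _ fun _ _ => monic_X_sub_C _]
  simp [card_erase_of_mem]

lemma eval_slopePoly_eq_zero_iff (f : F → F) (x d : F) :
    (slopePoly f x).eval d = 0 ↔ ∃ y, y ≠ x ∧ f y - d * y = f x - d * x := by
  rw [slopePoly, eval_prod, prod_eq_zero_iff]
  refine exists_congr fun y => ?_
  simp only [mem_erase, mem_univ, and_true, eval_sub, eval_X, eval_C]
  refine and_congr_right fun h => ?_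
  rw [sub_eq_zero, eq_comm, slope_eq_iff f h]

lemma prod_erase_zero : ∏ y ∈ univ.erase (0 : F), y = -1 := by
  have h := FiniteField.prod_univ_units_id_eq_neg_one (K := F)
  have h2 := congrArg (Units.val : Fˣ → F) h
  simp only [Units.coe_prod, Units.val_neg, Units.val_one] at h2
  rw [← h2]
  symm
  refine prod_bij (fun (u : Fˣ) _ => (u : F)) ?_ ?_ ?_ ?_
  · intro u _; simp
  · intro u _ v _ h; exact Units.ext h
  · intro b hb; exact ⟨Units.mk0 b (by simpa using hb), mem_univ _, rfl⟩
  · intros; rfl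

lemma prod_erase_injective {g : F → F} (hg : Function.Injective g) {x : F} :
    ∏ y ∈ univ.erase x, (g y - g x) = -1 := by
  rw [← prod_erase_zero]
  have hb : Function.Bijective g := Finite.injective_iff_bijective.1 hg
  refine prod_bij (fun y _ => g y - g x) ?_ ?_ ?_ ?_
  · intro y hy
    simpa [sub_eq_zero] using fun h => (mem_erase.1 hy).1 (hg h)
  · intro u _ v _ h
    exact hg (sub_left_injective h)
  · intro b hb'
    obtain ⟨y, hy⟩ := hb.2 (b + g x)
    refine ⟨y, ?_, by simp [hy]⟩
    simp only [mem_erase, mem_univ, and_true] at hb' ⊢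
    rintro rfl
    exact hb' (by simpa using hy)
  · intros; rfl

lemma eval_slopePoly_of_injective {f : F → F} {d : F}
    (h : Function.Injective fun y => f y - d * y) (x : F) : (slopePoly f x).eval d = 1 := by
  have h1 := prod_erase_injective h (x := x)
  have h2 := prod_erase_injective (g := fun y : F => -y) neg_injective (x := x)
  have h3 : (slopePoly f x).eval d * ∏ y ∈ univ.erase x, (-y - -x) =
      ∏ y ∈ univ.erase x, (f y - d * y - (f x - d * x)) := by
    rw [slopePoly, eval_prod, ← prod_mul_distrib]
    refine prod_congr rfl fun y hy => ?_
    have : y - x ≠ 0 := sub_ne_zero.2 (mem_erase.1 hy).1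
    simp only [eval_sub, eval_X, eval_C]
    field_simp
    ring
  rw [h1, h2] at h3
  linear_combination -h3

lemma count_roots_slopePoly (f : F → F) (x d : F) :
    (slopePoly f x).roots.count d + 1 = #{y | f y - d * y = f x - d * x} := by
  have h : (slopePoly f x).roots =
      (univ.erase x).val.map fun y => (f y - f x) / (y - x) := by
    rw [← roots_multiset_prod_X_sub_C ((univ.erase x).val.map fun y => (f y - f x) / (y - x)),
      Multiset.map_map]
    rfl
  rw [h, Multiset.count_map]
  have hx : x ∈ ({y | f y - d * y = f x - d * x} : Finset F) := by simp
  rw [← card_erase_add_one hx, ← Finset.filter_val, Finset.card_val]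
  congr 2
  ext y
  simp only [mem_filter, mem_erase, mem_univ, and_true, true_and]
  refine and_congr_right fun h => ?_
  rw [eq_comm, slope_eq_iff f h]

lemma sum_eval_of_monic {G : F[X]} (hm : G.Monic) (hd : G.natDegree = Fintype.card F - 1) :
    ∑ y, G.eval y = -1 := by
  have hlast : ∑ y : F, y ^ (Fintype.card F - 1) = -1 := by
    rw [← add_sum_erase univ _ (mem_univ 0), zero_pow (Nat.sub_pos_of_lt Fintype.one_lt_card).ne',
      zero_add, sum_congr rfl fun y hy =>
        FiniteField.pow_card_sub_one_eq_one y (mem_erase.1 hy).1]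
    simp [card_erase_of_mem, Nat.cast_sub Fintype.card_pos]
  simp_rw [eval_eq_sum_range, hd]
  rw [sum_comm, sum_range_succ, ← mul_sum, hlast, ← hd, hm.coeff_natDegree, one_mul, hd]
  rw [sum_eq_zero, zero_add]
  intro i hi
  rw [← mul_sum, FiniteField.sum_pow_lt_card_sub_one F _ (mem_range.1 hi), mul_zero]

variable {f : F → F} {n : F} {A : Finset F}

lemma IsTangentDir.eval {x m : F} (h : IsTangentDir f n A x m)
    (hA : ∀ d ∈ A, Function.Injective fun y => f y - d * y) (d : F) :
    (slopePoly f x).eval d = if d ∈ A then 1 else if d = m then -((#A + 1 : ℕ) : F) else 0 := by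
  split_ifs with h1 h2
  · exact eval_slopePoly_of_injective (hA d h1) x
  · subst h2
    have hs := sum_eval_of_monic (slopePoly_monic f x) (slopePoly_natDegree f x)
    rw [← sum_sdiff (subset_univ (insert d A)), sum_insert h.notMem,
      sum_congr (rfl : A = A) fun y hy => eval_slopePoly_of_injective (hA y hy) x,
      sum_eq_zero] at hs
    · simp only [sum_const, nsmul_eq_mul, mul_one] at hs
      push_cast
      linear_combination hs
    · intro y hy
      simp only [mem_sdiff, mem_univ, mem_insert, not_or, true_and] at hy
      exact (eval_slopePoly_eq_zero_iff f x y).2 (h.exists_of_ne y hy.2 hy.1)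
  · exact (eval_slopePoly_eq_zero_iff f x d).2 (h.exists_of_ne d h1 h2)

lemma IsTangentDir.cast_eq_zero_iff {x m : F} (h : IsTangentDir f n A x m)
    (hA : ∀ d ∈ A, Function.Injective fun y => f y - d * y) (hx : x ≠ n) :
    ((#A + 1 : ℕ) : F) = 0 ↔ f n - m * n = f x - m * x := by
  have he := h.eval hA m
  rw [if_neg h.notMem, if_pos rfl] at he
  rw [← neg_eq_zero, ← he, eval_slopePoly_eq_zero_iff]
  constructor
  · rintro ⟨y, hy, hy'⟩
    by_cases hyn : y = n
    · rwa [← hyn]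
    · exact absurd hy' (h.ne_of_ne y hy hyn)
  · exact fun h => ⟨n, hx.symm, h⟩

lemma slopePoly_degree_lt (f : F → F) (x : F) : (slopePoly f x).degree < Fintype.card F := by
  rw [degree_eq_natDegree (slopePoly_monic f x).ne_zero, slopePoly_natDegree]
  exact_mod_cast Nat.sub_lt Fintype.card_pos one_pos

lemma IsTangentDir.slopePoly_eq {x₁ x₂ m : F} (h₁ : IsTangentDir f n A x₁ m)
    (h₂ : IsTangentDir f n A x₂ m) (hA : ∀ d ∈ A, Function.Injective fun y => f y - d * y) :
    slopePoly f x₁ = slopePoly f x₂ :=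
  eq_of_eval_eq (slopePoly_degree_lt f x₁) (slopePoly_degree_lt f x₂) fun y => by
    rw [h₁.eval hA, h₂.eval hA]

lemma IsTangentDir.eq_of_two_le_count {x₁ x₂ m₁ m₂ t : F} (h₁ : IsTangentDir f n A x₁ m₁)
    (h₂ : IsTangentDir f n A x₂ m₂) (hA : ∀ d ∈ A, Function.Injective fun y => f y - d * y)
    (ha : ((#A + 1 : ℕ) : F) ≠ 0)
    (ht₁ : 2 ≤ (slopePoly f x₁).roots.count t) (ht₂ : 2 ≤ (slopePoly f x₂).roots.count t) :
    m₁ = m₂ := by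
  have hroot : ∀ x, 2 ≤ (slopePoly f x).roots.count t → (slopePoly f x).eval t = 0 := fun x h =>
    (mem_roots'.1 (Multiset.count_pos.1 (by lia))).2
  have hne : ∀ x m, IsTangentDir f n A x m → 2 ≤ (slopePoly f x).roots.count t → t - m ≠ 0 := by
    intro x m h h2 h0
    have h3 := h.eval hA t
    rw [hroot x h2, if_neg (by rw [sub_eq_zero.1 h0]; exact h.notMem),
      if_pos (sub_eq_zero.1 h0)] at h3
    exact ha (neg_eq_zero.1 h3.symm)
  set q := Fintype.card F with hq
  have hq2 : 1 < q := Fintype.one_lt_card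
  have hpow : ∀ y : F, y ^ (q - 1) = if y = 0 then 0 else 1 := by
    intro y
    split_ifs with h
    · rw [h, zero_pow (by lia)]
    · exact FiniteField.pow_card_sub_one_eq_one y h
  have hdeg : ∀ m : F, ((X - C m : F[X]) ^ (q - 1)).degree < (q : WithBot ℕ) := by
    intro m
    rw [degree_pow, degree_X_sub_C, nsmul_one]
    exact_mod_cast Nat.sub_lt (by lia) one_pos
  have key : slopePoly f x₁ - slopePoly f x₂ =
      C ((#A + 1 : ℕ) : F) * ((X - C m₁) ^ (q - 1) - (X - C m₂) ^ (q - 1)) := by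
    refine eq_of_eval_eq ?_ ?_ fun y => ?_
    · exact (degree_sub_le _ _).trans_lt
        (max_lt (slopePoly_degree_lt f x₁) (slopePoly_degree_lt f x₂))
    · rw [degree_C_mul ha]
      exact (degree_sub_le _ _).trans_lt (max_lt (hdeg m₁) (hdeg m₂))
    · simp only [eval_sub, eval_mul, eval_C, eval_pow, eval_X, hpow, h₁.eval hA, h₂.eval hA,
        sub_eq_zero]
      have := h₁.notMem
      have := h₂.notMem
      split_ifs <;> simp_all
  have hder := congrArg (fun G => (derivative G).eval t) key
  simp only [derivative_sub, derivative_C_mul, derivative_X_sub_C_pow, eval_sub, eval_mul, eval_C,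
    eval_pow, eval_X, derivative_eval_eq_zero_of_two_le_count ht₁,
    derivative_eval_eq_zero_of_two_le_count ht₂, sub_zero] at hder
  have hc : ((q - 1 : ℕ) : F) = -1 := by
    rw [Nat.cast_sub hq2.le, hq, FiniteField.cast_card_eq_zero]; simp
  rw [hc] at hder
  have hinv : ∀ m, t - m ≠ 0 → (t - m) ^ (q - 1 - 1) * (t - m) = 1 := by
    intro m hm
    rw [← pow_succ, show q - 1 - 1 + 1 = q - 1 by lia]
    exact FiniteField.pow_card_sub_one_eq_one _ hm
  have e₁ := hinv m₁ (hne x₁ m₁ h₁ ht₁)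
  have e₂ := hinv m₂ (hne x₂ m₂ h₂ ht₂)
  have e₃ : (t - m₁) ^ (q - 1 - 1) = (t - m₂) ^ (q - 1 - 1) := by
    rcases mul_eq_zero.1 hder.symm with h | h
    · exact absurd h ha
    · linear_combination -h
  rw [← e₃] at e₂
  have h0 : (t - m₁) ^ (q - 1 - 1) ≠ 0 := left_ne_zero_of_mul_eq_one e₁
  have h4 : t - m₁ = t - m₂ := mul_left_cancel₀ h0 (e₁.trans e₂.symm)
  exact sub_right_injective h4

end SlopePoly

section Plane

variable {F : Type*} [Field F]

lemma pgMem_mk {v : Fin 3 → F} (hv : v ≠ 0) (L : PGLine F) :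
    pgMem (Projectivization.mk F v hv) L ↔ v ∈ L.val := by
  rw [pgMem, Projectivization.submodule_mk, Submodule.span_singleton_le_iff_mem]

lemma finrank_sup_of_ne {P Q : PGPoint F} (h : P ≠ Q) :
    Module.finrank F ↥(P.submodule ⊔ Q.submodule) = 2 := by
  have hi := Projectivization.linearIndependent_pair_iff_ne.2 h
  rw [P.submodule_eq, Q.submodule_eq, ← Submodule.span_union]
  have hr : ({P.rep} ∪ {Q.rep} : Set (Fin 3 → F)) = Set.range ![P.rep, Q.rep] := by
    simp only [Matrix.range_cons, Matrix.range_empty, Set.union_empty]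
  rw [hr, finrank_span_eq_card hi, Fintype.card_fin]

lemma exists_line_through (P Q : PGPoint F) (h : P ≠ Q) : ∃ L : PGLine F, pgMem P L ∧ pgMem Q L :=
  ⟨⟨P.submodule ⊔ Q.submodule, finrank_sup_of_ne h⟩, le_sup_left, le_sup_right⟩

lemma line_unique {P Q : PGPoint F} (h : P ≠ Q) {L₁ L₂ : PGLine F} (hP₁ : pgMem P L₁)
    (hQ₁ : pgMem Q L₁) (hP₂ : pgMem P L₂) (hQ₂ : pgMem Q L₂) : L₁ = L₂ := by
  have key : ∀ L : PGLine F, pgMem P L → pgMem Q L → P.submodule ⊔ Q.submodule = L.val :=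
    fun L hP hQ => Submodule.eq_of_le_of_finrank_eq (sup_le hP hQ)
      ((finrank_sup_of_ne h).trans L.2.symm)
  exact Subtype.ext ((key L₁ hP₁ hQ₁).symm.trans (key L₂ hP₂ hQ₂))

lemma exists_common_point (L₁ L₂ : PGLine F) : ∃ P : PGPoint F, pgMem P L₁ ∧ pgMem P L₂ := by
  have h := Submodule.finrank_sup_add_finrank_inf_eq L₁.val L₂.val
  have h3 : Module.finrank F ↥(L₁.val ⊔ L₂.val) ≤ 3 := by
    simpa using Submodule.finrank_le (L₁.val ⊔ L₂.val)
  rw [L₁.2, L₂.2] at h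
  have hne : L₁.val ⊓ L₂.val ≠ ⊥ := by
    intro h0
    rw [h0, finrank_bot] at h
    lia
  obtain ⟨v, hv, hv0⟩ := Submodule.exists_mem_ne_zero_of_ne_bot hne
  exact ⟨Projectivization.mk F v hv0, (pgMem_mk hv0 _).2 hv.1, (pgMem_mk hv0 _).2 hv.2⟩

lemma not_line_contains_spanning {L : PGLine F} {v w u : Fin 3 → F}
    (hb : ∀ x, ∃ α β γ : F, x = α • v + β • w + γ • u)
    (hv : v ∈ L.val) (hw : w ∈ L.val) (hu : u ∈ L.val) : False := by
  have h : L.val = ⊤ := by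
    rw [eq_top_iff]
    rintro x -
    obtain ⟨α, β, γ, rfl⟩ := hb x
    exact add_mem (add_mem (L.val.smul_mem _ hv) (L.val.smul_mem _ hw)) (L.val.smul_mem _ hu)
  have h2 := L.2
  rw [h, finrank_top] at h2
  simp at h2

/-- Affine coordinates of the plane with line at infinity `ℓ`: `aff x y` is the affine point with
coordinates `(x, y)`, `dir d` is the point at infinity of the lines of slope `d`, and `P` is the
point at infinity of the vertical lines. -/
structure AffineCoords (ℓ : PGLine F) (P : PGPoint F) where
  aff : F → F → PGPoint F
  dir : F → PGPoint F
  mem_inf : pgMem P ℓ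
  aff_notMem : ∀ x y, ¬ pgMem (aff x y) ℓ
  dir_mem : ∀ d, pgMem (dir d) ℓ
  exists_aff : ∀ Q, ¬ pgMem Q ℓ → ∃ x y, Q = aff x y
  exists_dir : ∀ Q, pgMem Q ℓ → Q = P ∨ ∃ d, Q = dir d
  dir_injective : Function.Injective dir
  dir_ne : ∀ d, dir d ≠ P
  mem_iff_of_dir : ∀ {L : PGLine F} {x y d}, pgMem (aff x y) L → pgMem (dir d) L →
    ∀ x' y', pgMem (aff x' y') L ↔ y' - d * x' = y - d * x
  mem_iff_of_inf : ∀ {L : PGLine F} {x y}, pgMem (aff x y) L → pgMem P L →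
    ∀ x' y', pgMem (aff x' y') L ↔ x' = x

lemma exists_triple (ℓ : PGLine F) {e : Fin 3 → F} (he0 : e ≠ 0) (he : e ∈ ℓ.val) :
    ∃ v u : Fin 3 → F, v ∈ ℓ.val ∧ u ∉ ℓ.val ∧ LinearIndependent F ![u, v, e] := by
  obtain ⟨v, hv, hve⟩ : ∃ v ∈ ℓ.val, v ∉ F ∙ e := by
    by_contra! hc
    have h1 := Submodule.finrank_mono (show ℓ.val ≤ F ∙ e from hc)
    rw [ℓ.2, finrank_span_singleton he0] at h1
    lia
  obtain ⟨u, hu⟩ : ∃ u, u ∉ ℓ.val := by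
    by_contra! hc
    have h1 := ℓ.2
    rw [show ℓ.val = ⊤ from eq_top_iff.2 fun x _ => hc x, finrank_top] at h1
    simp at h1
  refine ⟨v, u, hv, hu, ?_⟩
  refine linearIndependent_finCons.2 ⟨linearIndependent_finCons.2
    ⟨LinearIndependent.of_subsingleton 0 (by simpa using he0), by simpa using hve⟩, ?_⟩
  refine fun h => hu (Submodule.span_le.2 ?_ h)
  rintro x ⟨i, rfl⟩
  fin_cases i
  · exact hv
  · exact he

lemma nonempty_affineCoords (ℓ : PGLine F) {P : PGPoint F} (hP : pgMem P ℓ) :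
    Nonempty (AffineCoords ℓ P) := by
  induction P using Projectivization.ind with
  | h e he0 =>
  have he : e ∈ ℓ.val := (pgMem_mk he0 ℓ).1 hP
  obtain ⟨v, u, hv, hu, hli⟩ := exists_triple ℓ he0 he
  have hspan : ∀ x, ∃ α β γ : F, x = α • u + β • v + γ • e := by
    intro x
    have := hli.span_eq_top_of_card_eq_finrank (by simp)
    have hx : x ∈ Submodule.span F (Set.range ![u, v, e]) := this ▸ Submodule.mem_top
    obtain ⟨c, rfl⟩ := (Submodule.mem_span_range_iff_exists_fun F).1 hx
    exact ⟨c 0, c 1, c 2, by simp [Fin.sum_univ_three]⟩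
  have hind : ∀ α β γ : F, α • u + β • v + γ • e = 0 → α = 0 ∧ β = 0 ∧ γ = 0 := by
    intro α β γ h
    have := Fintype.linearIndependent_iff.1 hli ![α, β, γ] (by simpa [Fin.sum_univ_three] using h)
    exact ⟨this 0, this 1, this 2⟩
  have hline : ∀ x y : F, x • v + y • e ∈ ℓ.val := fun x y =>
    add_mem (ℓ.val.smul_mem _ hv) (ℓ.val.smul_mem _ he)
  have haff : ∀ x y : F, u + (x • v + y • e) ∉ ℓ.val := fun x y h =>
    hu ((Submodule.add_mem_iff_left _ (hline x y)).1 h)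
  have haff0 : ∀ x y : F, u + (x • v + y • e) ≠ 0 := fun x y h => haff x y (h ▸ zero_mem _)
  have hdir0 : ∀ d : F, v + d • e ≠ 0 := fun d h => by
    have := (hind 0 1 d (by simpa using h)).2.1
    exact one_ne_zero this
  have hall : ∀ {L : PGLine F}, u ∈ L.val → v ∈ L.val → e ∈ L.val → False :=
    fun h₁ h₂ h₃ => not_line_contains_spanning hspan h₁ h₂ h₃
  refine ⟨{ aff := fun x y => Projectivization.mk F _ (haff0 x y)
            dir := fun d => Projectivization.mk F _ (hdir0 d)
            mem_inf := hP
            aff_notMem := fun x y h => haff x y ((pgMem_mk _ _).1 h)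
            dir_mem := fun d => (pgMem_mk _ _).2 (add_mem hv (ℓ.val.smul_mem _ he))
            exists_aff := ?_
            exists_dir := ?_
            dir_injective := ?_
            dir_ne := ?_
            mem_iff_of_dir := ?_
            mem_iff_of_inf := ?_ }⟩
  · intro Q
    induction Q using Projectivization.ind with
    | h w hw0 =>
    intro hQ
    rw [pgMem_mk] at hQ
    obtain ⟨α, β, γ, rfl⟩ := hspan w
    have hα : α ≠ 0 := by
      rintro rfl
      exact hQ (by simpa using hline β γ)
    refine ⟨β / α, γ / α, (Projectivization.mk_eq_mk_iff' F _ _ _ _).2 ⟨α, ?_⟩⟩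
    simp only [smul_add, smul_smul, mul_div_cancel₀ _ hα, add_assoc]
  · intro Q
    induction Q using Projectivization.ind with
    | h w hw0 =>
    intro hQ
    rw [pgMem_mk] at hQ
    obtain ⟨α, β, γ, rfl⟩ := hspan w
    have hα : α = 0 := by
      by_contra hα
      rw [add_assoc, Submodule.add_mem_iff_left _ (hline β γ), Submodule.smul_mem_iff _ hα] at hQ
      exact hu hQ
    subst hα
    by_cases hβ : β = 0
    · subst hβ
      exact Or.inl ((Projectivization.mk_eq_mk_iff' F _ _ _ _).2 ⟨γ, by simp⟩)
    · refine Or.inr ⟨γ / β, (Projectivization.mk_eq_mk_iff' F _ _ _ _).2 ⟨β, ?_⟩⟩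
      simp only [smul_add, smul_smul, mul_div_cancel₀ _ hβ, zero_smul, zero_add]
  · intro d d' h
    obtain ⟨c, hc⟩ := (Projectivization.mk_eq_mk_iff' F _ _ _ _).1 h
    have := hind 0 (c - 1) (c * d' - d) (by linear_combination (norm := module) hc)
    have hc1 : c = 1 := sub_eq_zero.1 this.2.1
    have := this.2.2
    rw [hc1] at this
    linear_combination -this
  · intro d h
    obtain ⟨c, hc⟩ := (Projectivization.mk_eq_mk_iff' F _ _ _ _).1 h
    have := hind 0 1 (d - c) (by linear_combination (norm := module) -hc)
    exact one_ne_zero this.2.1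
  · intro L x y d h₁ h₂ x' y'
    rw [pgMem_mk] at h₁ h₂ ⊢
    have key : u + (x' • v + y' • e) = u + (x • v + y • e) + (x' - x) • (v + d • e) +
        (y' - d * x' - (y - d * x)) • e := by module
    rw [key, Submodule.add_mem_iff_right _ (add_mem h₁ (L.val.smul_mem _ h₂))]
    constructor
    · intro h
      by_contra hne
      have heL := (Submodule.smul_mem_iff _ (sub_ne_zero.2 hne)).1 h
      have hvL := (Submodule.add_mem_iff_left _ (L.val.smul_mem d heL)).1 h₂
      exact hall ((Submodule.add_mem_iff_left _ (add_mem (L.val.smul_mem x hvL)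
        (L.val.smul_mem y heL))).1 h₁) hvL heL
    · intro h
      rw [h, sub_self, zero_smul]
      exact zero_mem _
  · intro L x y h₁ h₂ x' y'
    rw [pgMem_mk] at h₁ h₂ ⊢
    have key : u + (x' • v + y' • e) = u + (x • v + y • e) + (y' - y) • e + (x' - x) • v := by
      module
    rw [key, Submodule.add_mem_iff_right _ (add_mem h₁ (L.val.smul_mem _ h₂))]
    constructor
    · intro h
      by_contra hne
      have hvL := (Submodule.smul_mem_iff _ (sub_ne_zero.2 hne)).1 h
      exact hall ((Submodule.add_mem_iff_left _ (add_mem (L.val.smul_mem x hvL)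
        (L.val.smul_mem y h₂))).1 h₁) hvL h₂
    · intro h
      rw [h, sub_self, zero_smul]
      exact zero_mem _

end Plane

section Semioval

open Finset

variable {F : Type*} [Field F]

lemma point_unique {L ℓ : PGLine F} (h : L ≠ ℓ) {P Q : PGPoint F} (hP : pgMem P L)
    (hP' : pgMem P ℓ) (hQ : pgMem Q L) (hQ' : pgMem Q ℓ) : P = Q :=
  by_contra fun hne => h (line_unique hne hP hQ hP' hQ')

lemma eq_of_nsec_eq_one {S : Set (PGPoint F)} {t : PGLine F} (h : nsec S t = 1) {P Q : PGPoint F}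
    (hP : P ∈ S) (hPt : pgMem P t) (hQ : Q ∈ S) (hQt : pgMem Q t) : P = Q := by
  obtain ⟨R, hR⟩ := Set.ncard_eq_one.1 h
  have h1 : P ∈ ({R} : Set (PGPoint F)) := hR ▸ ⟨hP, hPt⟩
  have h2 : Q ∈ ({R} : Set (PGPoint F)) := hR ▸ ⟨hQ, hQt⟩
  exact h1.trans h2.symm

lemma exists_ne_of_nsec_ne_one {S : Set (PGPoint F)} {L : PGLine F} (h : nsec S L ≠ 1)
    {R : PGPoint F} (hR : R ∈ S) (hRL : pgMem R L) : ∃ Q ∈ S, Q ≠ R ∧ pgMem Q L := by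
  by_contra! hc
  refine h (Set.ncard_eq_one.2 ⟨R, Set.eq_singleton_iff_unique_mem.2 ⟨⟨hR, hRL⟩, ?_⟩⟩)
  rintro Q ⟨hQ, hQL⟩
  by_contra hne
  exact hc Q hQ hne hQL

namespace AffineCoords

variable {ℓ : PGLine F} {P : PGPoint F} (c : AffineCoords ℓ P)

lemma ne_of_aff_mem {L : PGLine F} {x y : F} (h : pgMem (c.aff x y) L) : L ≠ ℓ := by
  rintro rfl
  exact c.aff_notMem x y h

lemma exists_line_dir (x y d : F) : ∃ L : PGLine F, pgMem (c.aff x y) L ∧ pgMem (c.dir d) L :=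
  exists_line_through _ _ fun h => c.aff_notMem x y (h ▸ c.dir_mem d)

lemma exists_line_inf (x y : F) : ∃ L : PGLine F, pgMem (c.aff x y) L ∧ pgMem P L :=
  exists_line_through _ _ fun h => c.aff_notMem x y (by rw [h]; exact c.mem_inf)

lemma aff_inj {x y x' y' : F} (h : c.aff x y = c.aff x' y') : x = x' ∧ y = y' := by
  obtain ⟨L, h₁, h₂⟩ := c.exists_line_inf x y
  obtain ⟨L', h₁', h₂'⟩ := c.exists_line_dir x y 0
  have hx := (c.mem_iff_of_inf h₁ h₂ x' y').1 (h ▸ h₁)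
  have hy := (c.mem_iff_of_dir h₁' h₂' x' y').1 (h ▸ h₁')
  simp only [zero_mul, sub_zero] at hy
  exact ⟨hx.symm, hy.symm⟩

end AffineCoords

lemma ncard_line [Fintype F] (ℓ : PGLine F) :
    {Q : PGPoint F | pgMem Q ℓ}.ncard = Fintype.card F + 1 := by
  obtain ⟨P, hP, -⟩ := exists_common_point ℓ ℓ
  obtain ⟨c⟩ := nonempty_affineCoords ℓ hP
  have h : {Q : PGPoint F | pgMem Q ℓ} = insert P (Set.range c.dir) := by
    ext Q
    constructor
    · intro hQ
      rcases c.exists_dir Q hQ with rfl | ⟨d, rfl⟩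
      · exact Or.inl rfl
      · exact Or.inr ⟨d, rfl⟩
    · rintro (rfl | ⟨d, rfl⟩)
      · exact hP
      · exact c.dir_mem d
  rw [h, Set.ncard_insert_of_notMem, ← Set.image_univ, Set.ncard_image_of_injective _
    c.dir_injective, Set.ncard_univ, Nat.card_eq_fintype_card]
  rintro ⟨d, hd⟩
  exact c.dir_ne d hd

/-- Projecting a semioval from one of its points `R` onto a line not through `R` covers all points
of the line but one. -/
lemma exists_projection [Fintype F] {S : Set (PGPoint F)} (hS : isSemioval S) {ℓ : PGLine F}
    {R : PGPoint F} (hR : R ∈ S) (hRℓ : ¬ pgMem R ℓ) :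
    ∃ π : PGPoint F → PGPoint F, (π '' (S \ {R})).ncard = Fintype.card F ∧
      ∀ X ≠ R, ∀ L : PGLine F, pgMem R L → pgMem X L → pgMem (π X) L ∧ pgMem (π X) ℓ := by
  have hπ : ∀ X, ∃ Y, X ≠ R → ∀ L : PGLine F, pgMem R L → pgMem X L → pgMem Y L ∧ pgMem Y ℓ := by
    intro X
    by_cases hX : X = R
    · exact ⟨X, fun h => absurd hX h⟩
    · obtain ⟨L, hRL, hXL⟩ := exists_line_through R X (Ne.symm hX)
      obtain ⟨Y, hY⟩ := exists_common_point L ℓ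
      refine ⟨Y, fun _ L' h₁ h₂ => ?_⟩
      rwa [line_unique (Ne.symm hX) h₁ h₂ hRL hXL]
  choose π hπ using hπ
  refine ⟨π, ?_, hπ⟩
  obtain ⟨t, ⟨hRt, ht⟩, htu⟩ := hS R hR
  obtain ⟨M, hMt, hMℓ⟩ := exists_common_point t ℓ
  have himage : π '' (S \ {R}) = {Q | pgMem Q ℓ} \ {M} := by
    apply Set.Subset.antisymm
    · rintro _ ⟨X, ⟨hXS, hXR⟩, rfl⟩
      obtain ⟨L, hRL, hXL⟩ := exists_line_through R X (Ne.symm hXR)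
      have h := hπ X hXR L hRL hXL
      refine ⟨h.2, fun hM => hXR ?_⟩
      have hRM : R ≠ M := fun h => hRℓ (h ▸ hMℓ)
      have : L = t := line_unique hRM hRL (hM ▸ h.1) hRt hMt
      exact eq_of_nsec_eq_one ht hXS (this ▸ hXL) hR hRt
    · rintro Q ⟨hQℓ, hQM⟩
      have hRQ : R ≠ Q := fun h => hRℓ (h ▸ hQℓ)
      obtain ⟨L, hRL, hQL⟩ := exists_line_through R Q hRQ
      have hLℓ : L ≠ ℓ := fun h => hRℓ (h ▸ hRL)
      have hL1 : nsec S L ≠ 1 := fun h =>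
        hQM (point_unique hLℓ hQL hQℓ (htu L ⟨hRL, h⟩ ▸ hMt) hMℓ)
      obtain ⟨X, hXS, hXR, hXL⟩ := exists_ne_of_nsec_ne_one hL1 hR hRL
      have h := hπ X hXR L hRL hXL
      exact ⟨X, ⟨hXS, hXR⟩, point_unique hLℓ h.1 h.2 hQL hQℓ⟩
  rw [himage, Set.ncard_sdiff_singleton_of_mem hMℓ, ncard_line, Nat.add_sub_cancel]

lemma card_add_one_le_ncard [Fintype F] {S : Set (PGPoint F)} (hS : isSemioval S) {ℓ : PGLine F}
    {R : PGPoint F} (hR : R ∈ S) (hRℓ : ¬ pgMem R ℓ) : Fintype.card F + 1 ≤ S.ncard := by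
  obtain ⟨π, hπ, -⟩ := exists_projection hS hR hRℓ
  have h := Set.ncard_image_le (f := π) (Set.toFinite (S \ {R}))
  have h2 := Set.ncard_sdiff_singleton_add_one hR
  lia

lemma nsec_le_two_of_ncard_eq [Fintype F] {S : Set (PGPoint F)} (hS : isSemioval S) {ℓ : PGLine F}
    {R : PGPoint F} (hR : R ∈ S) (hRℓ : ¬ pgMem R ℓ) (hcard : S.ncard = Fintype.card F + 1)
    {L : PGLine F} (hRL : pgMem R L) : nsec S L ≤ 2 := by
  obtain ⟨π, hπ, hπL⟩ := exists_projection hS hR hRℓ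
  have hinj : Set.InjOn π (S \ {R}) := by
    refine Set.injOn_of_ncard_image_eq ?_
    rw [hπ, Set.ncard_sdiff_singleton_of_mem hR, hcard, Nat.add_sub_cancel]
  have hLℓ : L ≠ ℓ := fun h => hRℓ (h ▸ hRL)
  have h1 : ({P ∈ S | pgMem P L} \ {R}).ncard ≤ 1 := by
    rw [Set.ncard_le_one_iff]
    rintro X Y ⟨⟨hX, hXL⟩, hXR⟩ ⟨⟨hY, hYL⟩, hYR⟩
    have hX' := hπL X hXR L hRL hXL
    have hY' := hπL Y hYR L hRL hYL
    exact hinj ⟨hX, hXR⟩ ⟨hY, hYR⟩ (point_unique hLℓ hX'.1 hX'.2 hY'.1 hY'.2)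
  have h2 := Set.ncard_sdiff_singleton_add_one (s := {P ∈ S | pgMem P L}) (a := R) ⟨hR, hRL⟩
  rw [nsec]
  lia

/-- The affine points of `S` together with `N` form the graph of `f`, the point `N` having
abscissa `n`, and `A` is the set of slopes of the points of `S` at infinity, none of which is the
slope of a secant of the graph. -/
structure IsGraphSemioval {ℓ : PGLine F} {P : PGPoint F} (c : AffineCoords ℓ P)
    (S : Set (PGPoint F)) (N : PGPoint F) (f : F → F) (n : F) (A : Finset F) : Prop where
  semioval : isSemioval S
  inf_mem : P ∈ S
  nucleus_notMem : N ∉ S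
  nucleus_eq : N = c.aff n (f n)
  aff_mem_iff : ∀ x y, c.aff x y ∈ S ∪ {N} ↔ y = f x
  mem_iff : ∀ d, d ∈ A ↔ c.dir d ∈ S
  injective : ∀ d ∈ A, Function.Injective fun x => f x - d * x

lemma exists_isGraphSemioval [Fintype F] {ℓ : PGLine F} {P N : PGPoint F} (c : AffineCoords ℓ P)
    {S : Set (PGPoint F)} (hS : isSemioval S) (hP : P ∈ S) (hNS : N ∉ S) (hNℓ : ¬ pgMem N ℓ)
    (hcard : {Q ∈ S | ¬ pgMem Q ℓ}.ncard + 1 = Fintype.card F)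
    (hblock : ∀ L : PGLine F, L ≠ ℓ → ∀ Q ∈ S, pgMem Q ℓ → pgMem Q L →
      ∃ X ∈ S ∪ {N}, ¬ pgMem X ℓ ∧ pgMem X L) :
    ∃ f n A, IsGraphSemioval c S N f n A := by
  classical
  have hf : ∀ x, ∃ y, c.aff x y ∈ S ∪ {N} := by
    intro x
    obtain ⟨L, h₁, h₂⟩ := c.exists_line_inf x 0
    obtain ⟨X, hX, hXℓ, hXL⟩ := hblock L (c.ne_of_aff_mem h₁) P hP c.mem_inf h₂
    obtain ⟨x', y, rfl⟩ := c.exists_aff X hXℓ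
    exact ⟨y, (c.mem_iff_of_inf h₁ h₂ x' y).1 hXL ▸ hX⟩
  choose f hf using hf
  have hg : Function.Injective fun x => c.aff x (f x) := fun x y h => (c.aff_inj h).1
  have hrange : Set.range (fun x => c.aff x (f x)) = insert N {Q ∈ S | ¬ pgMem Q ℓ} := by
    refine Set.eq_of_subset_of_ncard_le ?_ ?_
    · rintro _ ⟨x, rfl⟩
      rcases hf x with h | h
      · exact Or.inr ⟨h, c.aff_notMem _ _⟩
      · exact Or.inl h
    · rw [Set.ncard_insert_of_notMem (fun h => hNS h.1), hcard, ← Set.image_univ,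
        Set.ncard_image_of_injective _ hg, Set.ncard_univ, Nat.card_eq_fintype_card]
  have hiff : ∀ x y, c.aff x y ∈ S ∪ {N} ↔ y = f x := by
    intro x y
    constructor
    · intro h
      have h' : c.aff x y ∈ Set.range (fun x => c.aff x (f x)) := by
        rw [hrange]
        rcases h with h | h
        · exact Or.inr ⟨h, c.aff_notMem _ _⟩
        · exact Or.inl h
      obtain ⟨x', hx'⟩ := h'
      obtain ⟨rfl, rfl⟩ := c.aff_inj hx'
      rfl
    · rintro rfl
      exact hf x
  obtain ⟨n, y, hn⟩ := c.exists_aff N hNℓ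
  have hy : y = f n := (hiff n y).1 (Or.inr hn.symm)
  refine ⟨f, n, univ.filter fun d => c.dir d ∈ S, hS, hP, hNS, hy ▸ hn, hiff, by simp, ?_⟩
  intro d hd
  have hdS : c.dir d ∈ S := by simpa using hd
  refine Finite.injective_iff_surjective.2 fun v => ?_
  obtain ⟨L, h₁, h₂⟩ := c.exists_line_dir 0 v d
  obtain ⟨X, hX, hXℓ, hXL⟩ := hblock L (c.ne_of_aff_mem h₁) _ hdS (c.dir_mem d) h₂
  obtain ⟨x, y, rfl⟩ := c.exists_aff X hXℓ
  have := (c.mem_iff_of_dir h₁ h₂ x y).1 hXL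
  rw [(hiff x y).1 hX] at this
  exact ⟨x, by simpa using this⟩

namespace IsGraphSemioval

variable {ℓ : PGLine F} {P : PGPoint F} {c : AffineCoords ℓ P} {S : Set (PGPoint F)}
  {N : PGPoint F} {f : F → F} {n : F} {A : Finset F}

lemma aff_mem (H : IsGraphSemioval c S N f n A) {x : F} (hx : x ≠ n) : c.aff x (f x) ∈ S := by
  rcases (H.aff_mem_iff x (f x)).2 rfl with h | h
  · exact h
  · exact absurd (c.aff_inj (h.trans H.nucleus_eq)).1 hx

lemma exists_eq_aff (H : IsGraphSemioval c S N f n A)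
    {R : PGPoint F} (hR : R ∈ S) (hRℓ : ¬ pgMem R ℓ) :
    ∃ x, x ≠ n ∧ R = c.aff x (f x) := by
  obtain ⟨x, y, rfl⟩ := c.exists_aff R hRℓ
  obtain rfl := (H.aff_mem_iff x y).1 (Or.inl hR)
  refine ⟨x, ?_, rfl⟩
  rintro rfl
  exact H.nucleus_notMem (H.nucleus_eq ▸ hR)

lemma exists_isTangentDir (H : IsGraphSemioval c S N f n A)
    {x : F} (hx : x ≠ n) {t : PGLine F} (hxt : pgMem (c.aff x (f x)) t)
    (ht : nsec S t = 1) : ∃ m, pgMem (c.dir m) t ∧ IsTangentDir f n A x m := by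
  have hR := H.aff_mem hx
  have htℓ := c.ne_of_aff_mem hxt
  obtain ⟨M, hMt, hMℓ⟩ := exists_common_point t ℓ
  have hMS : M ∉ S := fun h => c.aff_notMem x (f x) (eq_of_nsec_eq_one ht h hMt hR hxt ▸ hMℓ)
  rcases c.exists_dir M hMℓ with rfl | ⟨m, rfl⟩
  · exact absurd H.inf_mem hMS
  refine ⟨m, hMt, mt (H.mem_iff m).1 hMS, ?_, ?_⟩
  · intro y hyx hyn hy
    have hyt := (c.mem_iff_of_dir hxt hMt y (f y)).2 hy
    exact hyx (c.aff_inj (eq_of_nsec_eq_one ht (H.aff_mem hyn) hyt hR hxt)).1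
  · intro d hdA hdm
    obtain ⟨L, h₁, h₂⟩ := c.exists_line_dir x (f x) d
    have hL1 : nsec S L ≠ 1 := by
      intro h
      have hLt : L = t := (H.semioval _ hR).unique ⟨h₁, h⟩ ⟨hxt, ht⟩
      exact hdm (c.dir_injective
        (point_unique htℓ (hLt ▸ h₂) (c.dir_mem d) hMt (c.dir_mem m)))
    obtain ⟨Q, hQS, hQR, hQL⟩ := exists_ne_of_nsec_ne_one hL1 hR h₁
    have hQℓ : ¬ pgMem Q ℓ := by
      intro h
      obtain rfl := point_unique (c.ne_of_aff_mem h₁) hQL h h₂ (c.dir_mem d)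
      exact hdA ((H.mem_iff d).2 hQS)
    obtain ⟨y, -, rfl⟩ := H.exists_eq_aff hQS hQℓ
    refine ⟨y, ?_, (c.mem_iff_of_dir h₁ h₂ y (f y)).1 hQL⟩
    rintro rfl
    exact hQR rfl

lemma exists_tangent (H : IsGraphSemioval c S N f n A) {x : F} (hx : x ≠ n) :
    ∃ t m, pgMem (c.aff x (f x)) t ∧ nsec S t = 1 ∧ pgMem (c.dir m) t ∧
      IsTangentDir f n A x m := by
  obtain ⟨t, ⟨h₁, h₂⟩, -⟩ := H.semioval _ (H.aff_mem hx)
  obtain ⟨m, h₃, h₄⟩ := H.exists_isTangentDir hx h₁ h₂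
  exact ⟨t, m, h₁, h₂, h₃, h₄⟩

lemma nsec_of_inf (H : IsGraphSemioval c S N f n A)
    {x : F} {L : PGLine F} (hx : pgMem (c.aff x (f x)) L) (hP : pgMem P L) :
    nsec (S ∪ {N}) L = 2 := by
  have h : {Q ∈ S ∪ {N} | pgMem Q L} = {P, c.aff x (f x)} := by
    ext Q
    constructor
    · rintro ⟨hQ, hQL⟩
      by_cases hQℓ : pgMem Q ℓ
      · exact Or.inl (point_unique (c.ne_of_aff_mem hx) hQL hQℓ hP c.mem_inf)
      · obtain ⟨x', y, rfl⟩ := c.exists_aff Q hQℓ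
        obtain rfl := (c.mem_iff_of_inf hx hP x' y).1 hQL
        obtain rfl := (H.aff_mem_iff x' y).1 hQ
        exact Or.inr rfl
    · rintro (rfl | rfl)
      · exact ⟨Or.inl H.inf_mem, hP⟩
      · exact ⟨(H.aff_mem_iff x _).2 rfl, hx⟩
  rw [nsec, h, Set.ncard_pair]
  exact fun h => c.aff_notMem x (f x) (h ▸ c.mem_inf)

lemma nsec_line (H : IsGraphSemioval c S N f n A) : nsec S ℓ = #A + 1 := by
  have h : {Q ∈ S | pgMem Q ℓ} = insert P (c.dir '' A) := by
    ext Q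
    constructor
    · rintro ⟨hQ, hQℓ⟩
      rcases c.exists_dir Q hQℓ with rfl | ⟨d, rfl⟩
      · exact Or.inl rfl
      · exact Or.inr ⟨d, (H.mem_iff d).2 hQ, rfl⟩
    · rintro (rfl | ⟨d, hd, rfl⟩)
      · exact ⟨H.inf_mem, c.mem_inf⟩
      · exact ⟨(H.mem_iff d).1 hd, c.dir_mem d⟩
  rw [nsec, h, Set.ncard_insert_of_notMem, Set.ncard_image_of_injective _ c.dir_injective,
    Set.ncard_coe_finset]
  rintro ⟨d, -, hd⟩
  exact c.dir_ne d hd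

variable [Fintype F] [DecidableEq F]

lemma nsec_of_dir (H : IsGraphSemioval c S N f n A)
    {x d : F} {L : PGLine F} (hx : pgMem (c.aff x (f x)) L)
    (hd : pgMem (c.dir d) L) :
    nsec (S ∪ {N}) L = (slopePoly f x).roots.count d + 1 + if d ∈ A then 1 else 0 := by
  have himage : ((fun y => c.aff y (f y)) '' {y | f y - d * y = f x - d * x}).ncard =
      #{y | f y - d * y = f x - d * x} := by
    rw [Set.ncard_image_of_injective _ fun x y h => (c.aff_inj h).1, ← Set.ncard_coe_finset]
    simp
  have hsub : (fun y => c.aff y (f y)) '' {y | f y - d * y = f x - d * x} ⊆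
      {Q ∈ S ∪ {N} | pgMem Q L} := by
    rintro _ ⟨y, hy, rfl⟩
    exact ⟨(H.aff_mem_iff y _).2 rfl, (c.mem_iff_of_dir hx hd y (f y)).2 hy⟩
  have hdir : ∀ {Q}, Q ∈ S ∪ {N} → pgMem Q L → Q ≠ c.dir d →
      Q ∈ (fun y => c.aff y (f y)) '' {y | f y - d * y = f x - d * x} := by
    intro Q hQ hQL hne
    have hQℓ : ¬ pgMem Q ℓ := fun h =>
      hne (point_unique (c.ne_of_aff_mem hx) hQL h hd (c.dir_mem d))
    obtain ⟨y, z, rfl⟩ := c.exists_aff Q hQℓ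
    obtain rfl := (H.aff_mem_iff y z).1 hQ
    exact ⟨y, (c.mem_iff_of_dir hx hd y _).1 hQL, rfl⟩
  rw [nsec, count_roots_slopePoly, ← himage]
  split_ifs with hdA
  · rw [← Set.ncard_insert_of_notMem (a := c.dir d)]
    · congr 1
      refine Set.Subset.antisymm (fun Q hQ => ?_) (Set.insert_subset ?_ hsub)
      · by_cases h : Q = c.dir d
        · exact Or.inl h
        · exact Or.inr (hdir hQ.1 hQ.2 h)
      · exact ⟨Or.inl ((H.mem_iff d).1 hdA), hd⟩
    · rintro ⟨y, -, hy⟩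
      have hy' : c.aff y (f y) = c.dir d := hy
      exact c.aff_notMem y (f y) (hy' ▸ c.dir_mem d)
  · rw [add_zero]
    congr 1
    refine Set.Subset.antisymm (fun Q hQ => hdir hQ.1 hQ.2 ?_) hsub
    rintro rfl
    rcases hQ.1 with h | h
    · exact hdA ((H.mem_iff d).2 h)
    · exact c.aff_notMem n (f n) ((h.trans H.nucleus_eq) ▸ c.dir_mem d)

lemma nsec_eq_of_slopePoly_eq (H : IsGraphSemioval c S N f n A)
    {x₁ x₂ : F} (h : slopePoly f x₁ = slopePoly f x₂) {M : PGPoint F}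
    (hM : pgMem M ℓ) {L₁ L₂ : PGLine F} (h₁ : pgMem (c.aff x₁ (f x₁)) L₁) (hM₁ : pgMem M L₁)
    (h₂ : pgMem (c.aff x₂ (f x₂)) L₂) (hM₂ : pgMem M L₂) :
    nsec (S ∪ {N}) L₁ = nsec (S ∪ {N}) L₂ := by
  rcases c.exists_dir M hM with rfl | ⟨d, rfl⟩
  · rw [H.nsec_of_inf h₁ hM₁, H.nsec_of_inf h₂ hM₂]
  · rw [H.nsec_of_dir h₁ hM₁, H.nsec_of_dir h₂ hM₂, h]

lemma two_le_count_of_three_le_nsec (H : IsGraphSemioval c S N f n A)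
    {x d : F} {L : PGLine F} (hx : pgMem (c.aff x (f x)) L)
    (hd : pgMem (c.dir d) L) (h : 3 ≤ nsec (S ∪ {N}) L) :
    2 ≤ (slopePoly f x).roots.count d := by
  rw [H.nsec_of_dir hx hd] at h
  split_ifs at h with hdA
  · have h0 : (slopePoly f x).roots.count d = 0 := by
      refine Multiset.count_eq_zero.2 fun hr => ?_
      have := (Polynomial.mem_roots'.1 hr).2
      rw [Polynomial.IsRoot, eval_slopePoly_of_injective (H.injective d hdA)] at this
      exact one_ne_zero this
    lia
  · lia

/-- If the tangents at the affine points of `S` pass through a common affine point, then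
`S` has at most two points at infinity. -/
lemma card_le_one_of_pencil (H : IsGraphSemioval c S N f n A) {C : PGPoint F} (hCℓ : ¬ pgMem C ℓ)
    (hC : ∀ x, x ≠ n → ∀ t, pgMem (c.aff x (f x)) t → nsec S t = 1 → pgMem C t) : #A ≤ 1 := by
  have hm : ∀ x, ∃ m, x ≠ n → ∃ t, pgMem (c.aff x (f x)) t ∧ nsec S t = 1 ∧
      pgMem (c.dir m) t ∧ m ∉ A := by
    intro x
    by_cases hx : x = n
    · exact ⟨0, fun h => absurd hx h⟩
    · obtain ⟨t, m, h₁, h₂, h₃, h₄⟩ := H.exists_tangent hx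
      exact ⟨m, fun _ => ⟨t, h₁, h₂, h₃, h₄.notMem⟩⟩
  choose m hm using hm
  have hle : #(univ.erase n) ≤ #(Aᶜ) := by
    refine card_le_card_of_injOn m ?_ ?_
    · intro x hx
      obtain ⟨t, -, -, -, h⟩ := hm x (by simpa using hx)
      simpa using h
    · intro x hx y hy hxy
      have hx : x ≠ n := by simpa using hx
      have hy : y ≠ n := by simpa using hy
      obtain ⟨t, h₁, h₂, h₃, -⟩ := hm x hx
      obtain ⟨t', h₁', h₂', h₃', -⟩ := hm y hy
      have hne : C ≠ c.dir (m x) := fun h => hCℓ (h ▸ c.dir_mem _)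
      have htt : t = t' := line_unique hne (hC x hx t h₁ h₂) h₃ (hC y hy t' h₁' h₂') (hxy ▸ h₃')
      subst htt
      exact (c.aff_inj (eq_of_nsec_eq_one h₂ (H.aff_mem hx) h₁ (H.aff_mem hy) h₁')).1
  rw [card_erase_of_mem (mem_univ n), card_compl, card_univ] at hle
  have := card_le_univ A
  have := Fintype.one_lt_card (α := F)
  lia

end IsGraphSemioval

end Semioval

/-- Let `S` be a semioval of size `q − 1 + a` in `PG(2,q)`, `q = p^h`, with an `a`-secant `ℓ`,
let `N` be the nucleus of `ℓ` (the common point of the tangents to `S` at the points of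
`ℓ ∩ S`), let `LL` be the set of tangents to `S` through the points of `S ∖ ℓ`, and let
`B = {N} ∪ (S Δ ℓ)`.  Then one of the following holds.
(1) `S` is an oval.
(2) `LL` is contained in a pencil with carrier `C`; then `C ∈ ℓ` and `B ∖ {C}` is a blocking
    set of Rédei type with Rédei line `ℓ`.
(3) `LL` is not contained in any pencil; then `B` is a minimal blocking set of Rédei type
    with Rédei line `ℓ` and moreover
    (a) `p ∤ a`;
    (b) for every `R ∈ S ∖ ℓ` the line `RN` is not a tangent to `S`;
    (c) if `R₁, R₂ ∈ S ∖ ℓ` and there is `T ∈ ℓ` such that `RᵢT` meets `S ∪ {N}` in at least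
        three points for `i = 1,2`, then `|R₁M ∩ (S ∪ {N})| = |R₂M ∩ (S ∪ {N})|` for all `M ∈ ℓ`;
    (d) if `R₁, R₂ ∈ S ∖ ℓ` and the tangents to `S` at these two points meet on `ℓ`, then
        `|R₁M ∩ (S ∪ {N})| = |R₂M ∩ (S ∪ {N})|` for all `M ∈ ℓ`. -/
theorem stmt_6 {F : Type*} [Field F] [Fintype F] (p h q : ℕ) (hp : p.Prime) (hq : q = p ^ h)
    (hcard : Fintype.card F = q)
    (a : ℕ) (S : Set (PGPoint F)) (hS : isSemioval S) (hsize : S.ncard = q - 1 + a)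
    (ℓ : PGLine F) (hℓ : nsec S ℓ = a)
    (N : PGPoint F)
    (hN : ∀ P ∈ S, pgMem P ℓ → ∀ t : PGLine F, pgMem P t → nsec S t = 1 → pgMem N t)
    (LL : Set (PGLine F))
    (hLL : LL = {t : PGLine F | nsec S t = 1 ∧ ∃ R ∈ S, ¬ pgMem R ℓ ∧ pgMem R t})
    (B : Set (PGPoint F))
    (hB : B = {N} ∪ ((S \ {P | pgMem P ℓ}) ∪ ({P | pgMem P ℓ} \ S))) :
    -- (1) S is an oval
    (S.ncard = q + 1 ∧ ∀ L : PGLine F, nsec S L ≤ 2) ∨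
    -- (2) LL is contained in a pencil with carrier C
    (∃ C : PGPoint F, (∀ t ∈ LL, pgMem C t) ∧ pgMem C ℓ ∧
      isRedeiWithLine q (B \ {C}) ℓ) ∨
    -- (3) LL is not contained in any pencil
    ((¬ ∃ C : PGPoint F, ∀ t ∈ LL, pgMem C t) ∧
      isMinimalBlocking B ∧ isRedeiWithLine q B ℓ ∧
      -- (a)
      ¬ (p ∣ a) ∧
      -- (b)
      (∀ R ∈ S, ¬ pgMem R ℓ → R ≠ N →
        ∀ t : PGLine F, pgMem R t → pgMem N t → nsec S t ≠ 1) ∧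
      -- (c)
      (∀ R₁ ∈ S, ∀ R₂ ∈ S, ¬ pgMem R₁ ℓ → ¬ pgMem R₂ ℓ →
        (∃ T : PGPoint F, pgMem T ℓ ∧
          (∀ L : PGLine F, pgMem R₁ L → pgMem T L → 3 ≤ nsec (S ∪ {N}) L) ∧
          (∀ L : PGLine F, pgMem R₂ L → pgMem T L → 3 ≤ nsec (S ∪ {N}) L)) →
        ∀ M : PGPoint F, pgMem M ℓ →
          ∀ L₁ L₂ : PGLine F, pgMem R₁ L₁ → pgMem M L₁ → pgMem R₂ L₂ → pgMem M L₂ →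
            nsec (S ∪ {N}) L₁ = nsec (S ∪ {N}) L₂) ∧
      -- (d)
      (∀ R₁ ∈ S, ∀ R₂ ∈ S, ¬ pgMem R₁ ℓ → ¬ pgMem R₂ ℓ →
        (∃ t₁ t₂ : PGLine F, pgMem R₁ t₁ ∧ nsec S t₁ = 1 ∧ pgMem R₂ t₂ ∧ nsec S t₂ = 1 ∧
          ∃ X : PGPoint F, pgMem X t₁ ∧ pgMem X t₂ ∧ pgMem X ℓ) →
        ∀ M : PGPoint F, pgMem M ℓ →
          ∀ L₁ L₂ : PGLine F, pgMem R₁ L₁ → pgMem M L₁ → pgMem R₂ L₂ → pgMem M L₂ →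
            nsec (S ∪ {N}) L₁ = nsec (S ∪ {N}) L₂)) := by
  classical
  have hq2 : 1 < q := hcard ▸ Fintype.one_lt_card
  have hU : {Q ∈ S | ¬ pgMem Q ℓ}.ncard + 1 = q := by
    have h1 := Set.ncard_inter_add_ncard_sdiff_eq_ncard S {P | pgMem P ℓ} (Set.toFinite _)
    have h2 : (S ∩ {P | pgMem P ℓ}).ncard = a := hℓ
    have h3 : (S \ {P | pgMem P ℓ}).ncard = {Q ∈ S | ¬ pgMem Q ℓ}.ncard := rfl
    lia
  have ha2 : 2 ≤ a := by
    obtain ⟨R, hR, hRℓ⟩ : {Q ∈ S | ¬ pgMem Q ℓ}.Nonempty :=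
      Set.nonempty_of_ncard_ne_zero (by lia)
    have := card_add_one_le_ncard hS hR hRℓ
    lia
  by_cases ha : a = 2
  · refine Or.inl ⟨by lia, fun L => ?_⟩
    by_cases hL : L = ℓ
    · rw [hL, hℓ, ha]
    by_cases hR : ∃ R ∈ S, pgMem R L ∧ ¬ pgMem R ℓ
    · obtain ⟨R, hR, hRL, hRℓ⟩ := hR
      exact nsec_le_two_of_ncard_eq hS hR hRℓ (by lia) hRL
    · push Not at hR
      refine le_trans ((Set.ncard_le_one_iff (Set.toFinite _)).2 ?_) one_le_two
      rintro X Y ⟨hX, hXL⟩ ⟨hY, hYL⟩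
      exact point_unique hL hXL (hR X hX hXL) hYL (hR Y hY hYL)
  right
  obtain ⟨P, P', ⟨hPS, hPℓ⟩, ⟨hPS', hPℓ'⟩, hPP⟩ :=
    (Set.one_lt_ncard_iff (Set.toFinite {Q ∈ S | pgMem Q ℓ})).1 (by rw [← nsec]; lia)
  have hNℓ : ¬ pgMem N ℓ := by
    intro hNℓ
    have key : ∀ Q ∈ S, pgMem Q ℓ → Q = N := by
      intro Q hQ hQℓ
      by_contra hne
      obtain ⟨t, ⟨hQt, ht⟩, -⟩ := hS Q hQ
      have : t = ℓ := line_unique hne hQt (hN Q hQ hQℓ t hQt ht) hQℓ hNℓ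
      rw [this] at ht
      lia
    exact hPP ((key P hPS hPℓ).trans (key P' hPS' hPℓ').symm)
  have hNS : N ∉ S := by
    intro hNS
    obtain ⟨t, ⟨hPt, ht⟩, -⟩ := hS P hPS
    have := eq_of_nsec_eq_one ht hPS hPt hNS (hN P hPS hPℓ t hPt ht)
    exact hNℓ (this ▸ hPℓ)
  have hblock : ∀ L : PGLine F, L ≠ ℓ → ∀ Q ∈ S, pgMem Q ℓ → pgMem Q L →
      ∃ X ∈ S ∪ {N}, ¬ pgMem X ℓ ∧ pgMem X L := by
    intro L hL Q hQ hQℓ hQL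
    by_cases hL1 : nsec S L = 1
    · exact ⟨N, Or.inr rfl, hNℓ, hN Q hQ hQℓ L hQL hL1⟩
    · obtain ⟨X, hX, hXQ, hXL⟩ := exists_ne_of_nsec_ne_one hL1 hQ hQL
      exact ⟨X, Or.inl hX, fun h => hXQ (point_unique hL hXL h hQL hQℓ), hXL⟩
  obtain ⟨c⟩ := nonempty_affineCoords ℓ hPℓ
  obtain ⟨f, n, A, H⟩ := exists_isGraphSemioval c hS hPS hNS hNℓ (by lia) hblock
  have haA : a = A.card + 1 := hℓ.symm.trans H.nsec_line
  have hLLmem : ∀ x, x ≠ n → ∀ t, pgMem (c.aff x (f x)) t → nsec S t = 1 → t ∈ LL := by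
    intro x hx t hxt ht
    rw [hLL]
    exact ⟨ht, _, H.aff_mem hx, c.aff_notMem _ _, hxt⟩
  have hcarrier : ∀ C, (∀ t ∈ LL, pgMem C t) → pgMem C ℓ := by
    intro C hC
    by_contra hCℓ
    have := H.card_le_one_of_pencil hCℓ fun x hx t hxt ht => hC t (hLLmem x hx t hxt ht)
    lia
  have hane : ((A.card + 1 : ℕ) : F) ≠ 0 := by
    intro h0
    refine hNℓ (hcarrier N fun t ht => ?_)
    rw [hLL] at ht
    obtain ⟨ht1, R, hR, hRℓ, hRt⟩ := ht
    obtain ⟨x, hx, rfl⟩ := H.exists_eq_aff hR hRℓ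
    obtain ⟨m, hmt, hm⟩ := H.exists_isTangentDir hx hRt ht1
    rw [H.nucleus_eq]
    exact (c.mem_iff_of_dir hRt hmt _ _).2 ((hm.cast_eq_zero_iff H.injective hx).1 h0)
  have htangent : ∀ x, x ≠ n → ∀ t, pgMem (c.aff x (f x)) t → pgMem N t → nsec S t ≠ 1 := by
    intro x hx t hxt hNt ht
    obtain ⟨m, hmt, hm⟩ := H.exists_isTangentDir hx hxt ht
    rw [H.nucleus_eq] at hNt
    exact hane ((hm.cast_eq_zero_iff H.injective hx).2 ((c.mem_iff_of_dir hxt hmt _ _).1 hNt))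
  have hBaff : ∀ x y, c.aff x y ∈ B ↔ y = f x := by
    intro x y
    rw [← H.aff_mem_iff, hB]
    have := c.aff_notMem x y
    simp only [Set.mem_union, Set.mem_sdiff, Set.mem_ofPred_eq, Set.mem_singleton_iff]
    tauto
  have hBline : ∀ Q, pgMem Q ℓ → (Q ∈ B ↔ Q ∉ S) := by
    intro Q hQ
    have : Q ≠ N := fun h => hNℓ (h ▸ hQ)
    rw [hB]
    simp only [Set.mem_union, Set.mem_sdiff, Set.mem_ofPred_eq, Set.mem_singleton_iff]
    tauto
  have hredei : ∀ B' ⊆ B, (∀ x, c.aff x (f x) ∈ B') → isBlocking B' → isRedeiWithLine q B' ℓ := by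
    intro B' hB' haff hbl
    have h1 := Set.ncard_inter_add_ncard_sdiff_eq_ncard B' {P | pgMem P ℓ} (Set.toFinite _)
    have h2 : (B' ∩ {P | pgMem P ℓ}).ncard = nsec B' ℓ := rfl
    have h3 : B' \ {P | pgMem P ℓ} = Set.range fun x => c.aff x (f x) := by
      refine Set.Subset.antisymm ?_ ?_
      · rintro Q ⟨hQ, hQℓ⟩
        obtain ⟨x, y, rfl⟩ := c.exists_aff Q hQℓ
        obtain rfl := (hBaff x y).1 (hB' hQ)
        exact ⟨x, rfl⟩
      · rintro _ ⟨x, rfl⟩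
        exact ⟨haff x, c.aff_notMem _ _⟩
    have h4 : (B' \ {P | pgMem P ℓ}).ncard = q := by
      rw [h3, ← Set.image_univ, Set.ncard_image_of_injective _ fun x y h => (c.aff_inj h).1,
        Set.ncard_univ, Nat.card_eq_fintype_card, hcard]
    have h5 : nsec B' ℓ ≤ ({Q | pgMem Q ℓ} \ {Q ∈ S | pgMem Q ℓ}).ncard :=
      Set.ncard_le_ncard (fun Q hQ => ⟨hQ.2, fun h => (hBline Q hQ.2).1 (hB' hQ.1) h.1⟩)
        (Set.toFinite _)
    rw [Set.ncard_sdiff (fun Q hQ => hQ.2) (Set.toFinite _), ncard_line, ← nsec, hℓ] at h5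
    exact ⟨hbl, by lia, by lia⟩
  have hBblock : isBlocking B := by
    intro L
    by_cases hL : L = ℓ
    · obtain ⟨x, hx⟩ := exists_ne n
      obtain ⟨-, m, -, -, -, hm⟩ := H.exists_tangent hx
      exact ⟨c.dir m, (hBline _ (c.dir_mem m)).2 (mt (H.mem_iff m).2 hm.notMem),
        hL ▸ c.dir_mem m⟩
    · obtain ⟨M, hML, hMℓ⟩ := exists_common_point L ℓ
      by_cases hMS : M ∈ S
      · obtain ⟨X, hX, hXℓ, hXL⟩ := hblock L hL M hMS hMℓ hML
        obtain ⟨x, y, rfl⟩ := c.exists_aff X hXℓ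
        exact ⟨_, (hBaff x y).2 ((H.aff_mem_iff x y).1 hX), hXL⟩
      · exact ⟨M, (hBline M hMℓ).2 hMS, hML⟩
  by_cases hpencil : ∃ C : PGPoint F, ∀ t ∈ LL, pgMem C t
  · left
    obtain ⟨C, hC⟩ := hpencil
    have hCℓ := hcarrier C hC
    refine ⟨C, hC, hCℓ, hredei _ Set.sdiff_subset ?_ ?_⟩
    · exact fun x => ⟨(hBaff x _).2 rfl, fun h =>
        c.aff_notMem x (f x) ((show c.aff x (f x) = C from h) ▸ hCℓ)⟩
    obtain ⟨d, rfl⟩ : ∃ d, C = c.dir d := by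
      obtain ⟨x, hx⟩ := exists_ne n
      obtain ⟨t, m, hxt, ht, hmt, -⟩ := H.exists_tangent hx
      exact ⟨m, point_unique (c.ne_of_aff_mem hxt) (hC t (hLLmem x hx t hxt ht)) hCℓ hmt
        (c.dir_mem m)⟩
    have hinj : Function.Injective fun x => f x - d * x := by
      have key : ∀ x y, x ≠ n → f y - d * y = f x - d * x → y = x := by
        intro x y hx hxy
        obtain ⟨t, -, hxt, ht, -, -⟩ := H.exists_tangent hx
        have hyt := (c.mem_iff_of_dir hxt (hC t (hLLmem x hx t hxt ht)) y (f y)).2 hxy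
        have hyn : y ≠ n := by
          rintro rfl
          exact htangent x hx t hxt (H.nucleus_eq ▸ hyt) ht
        exact (c.aff_inj (eq_of_nsec_eq_one ht (H.aff_mem hyn) hyt (H.aff_mem hx) hxt)).1
      intro x y hxy
      by_cases hx : x = n
      · by_cases hy : y = n
        · rw [hx, hy]
        · exact key y x hy hxy
      · exact (key x y hx hxy.symm).symm
    intro L
    obtain ⟨Q, hQB, hQL⟩ := hBblock L
    by_cases hQ : Q = c.dir d
    · subst hQ
      by_cases hL : L = ℓ
      · obtain ⟨e, he⟩ : ∃ e, e ∉ insert d A := by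
          by_contra! hall
          have hdA : d ∉ A := mt (H.mem_iff d).1 ((hBline _ (c.dir_mem d)).1 hQB)
          have := Finset.card_insert_of_notMem hdA
          rw [Finset.eq_univ_of_forall hall, Finset.card_univ] at this
          rw [← this, FiniteField.cast_card_eq_zero] at hane
          exact hane rfl
        rw [Finset.mem_insert, not_or] at he
        exact ⟨c.dir e, ⟨(hBline _ (c.dir_mem e)).2 (mt (H.mem_iff e).2 he.2),
          fun h => he.1 (c.dir_injective h)⟩, hL ▸ c.dir_mem e⟩
      · obtain ⟨R, hRL, hRℓ⟩ : ∃ R, pgMem R L ∧ ¬ pgMem R ℓ := by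
          by_contra! hall
          have h1 : {Q : PGPoint F | pgMem Q L}.ncard ≤ 1 :=
            (Set.ncard_le_one_iff (Set.toFinite _)).2 fun X Y =>
              point_unique hL X (hall _ X) Y (hall _ Y)
          rw [ncard_line] at h1
          lia
        obtain ⟨x, y, rfl⟩ := c.exists_aff R hRℓ
        obtain ⟨z, hz⟩ := Finite.surjective_of_injective hinj (y - d * x)
        exact ⟨c.aff z (f z), ⟨(hBaff z _).2 rfl, fun h =>
          c.aff_notMem z (f z) ((show c.aff z (f z) = _ from h) ▸ c.dir_mem d)⟩,
          (c.mem_iff_of_dir hRL hQL z _).2 hz⟩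
    · exact ⟨Q, ⟨hQB, hQ⟩, hQL⟩
  right
  have hkey : ∀ x₁ x₂, slopePoly f x₁ = slopePoly f x₂ → ∀ M : PGPoint F, pgMem M ℓ →
      ∀ L₁ L₂ : PGLine F, pgMem (c.aff x₁ (f x₁)) L₁ → pgMem M L₁ → pgMem (c.aff x₂ (f x₂)) L₂ →
        pgMem M L₂ → nsec (S ∪ {N}) L₁ = nsec (S ∪ {N}) L₂ :=
    fun x₁ x₂ h M hM L₁ L₂ h₁ hM₁ h₂ hM₂ => H.nsec_eq_of_slopePoly_eq h hM h₁ hM₁ h₂ hM₂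
  refine ⟨hpencil, ⟨hBblock, ?_⟩, hredei B subset_rfl (fun x => (hBaff x _).2 rfl) hBblock,
    ?_, ?_, ?_, ?_⟩
  · intro Q hQ hbl
    by_cases hQℓ : pgMem Q ℓ
    · have hQS := (hBline Q hQℓ).1 hQ
      obtain ⟨d, rfl⟩ : ∃ d, Q = c.dir d := by
        rcases c.exists_dir Q hQℓ with rfl | h
        · exact absurd hPS hQS
        · exact h
      have hninj : ¬ Function.Injective fun x => f x - d * x := by
        intro hinj
        refine hpencil ⟨c.dir d, fun t ht => ?_⟩
        rw [hLL] at ht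
        obtain ⟨ht1, R, hR, hRℓ, hRt⟩ := ht
        obtain ⟨x, hx, rfl⟩ := H.exists_eq_aff hR hRℓ
        obtain ⟨m, hmt, hm⟩ := H.exists_isTangentDir hx hRt ht1
        by_cases hdm : d = m
        · rwa [hdm]
        · obtain ⟨y, hyx, hy⟩ := hm.exists_of_ne d (mt (H.mem_iff d).1 hQS) hdm
          exact absurd (hinj hy) hyx
      rw [Finite.injective_iff_surjective, Function.Surjective] at hninj
      push Not at hninj
      obtain ⟨v, hv⟩ := hninj
      obtain ⟨L, h₁, h₂⟩ := c.exists_line_dir 0 v d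
      obtain ⟨X, ⟨hXB, hXQ⟩, hXL⟩ := hbl L
      by_cases hXℓ : pgMem X ℓ
      · exact hXQ (point_unique (c.ne_of_aff_mem h₁) hXL hXℓ h₂ hQℓ)
      · obtain ⟨x, y, rfl⟩ := c.exists_aff X hXℓ
        obtain rfl := (hBaff x y).1 hXB
        exact hv x (by simpa using (c.mem_iff_of_dir h₁ h₂ x _).1 hXL)
    · obtain ⟨x, y, rfl⟩ := c.exists_aff Q hQℓ
      obtain rfl := (hBaff x y).1 hQ
      obtain ⟨L, h₁, h₂⟩ := c.exists_line_inf x (f x)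
      obtain ⟨X, ⟨hXB, hXQ⟩, hXL⟩ := hbl L
      by_cases hXℓ : pgMem X ℓ
      · have := point_unique (c.ne_of_aff_mem h₁) hXL hXℓ h₂ hPℓ
        exact (hBline X hXℓ).1 hXB (this ▸ hPS)
      · obtain ⟨x', y', rfl⟩ := c.exists_aff X hXℓ
        obtain rfl := (hBaff x' y').1 hXB
        obtain rfl := (c.mem_iff_of_inf h₁ h₂ x' _).1 hXL
        exact hXQ rfl
  · intro hpa
    have := Fact.mk hp
    have : CharP F p := charP_of_card_eq_prime_pow (hcard.trans hq)
    rw [haA] at hpa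
    exact hane ((CharP.cast_eq_zero_iff F p _).2 hpa)
  · intro R hR hRℓ _ t hRt hNt
    obtain ⟨x, hx, rfl⟩ := H.exists_eq_aff hR hRℓ
    exact htangent x hx t hRt hNt
  · intro R₁ hR₁ R₂ hR₂ hR₁ℓ hR₂ℓ hT
    obtain ⟨T, hTℓ, hT₁, hT₂⟩ := hT
    obtain ⟨x₁, hx₁, rfl⟩ := H.exists_eq_aff hR₁ hR₁ℓ
    obtain ⟨x₂, hx₂, rfl⟩ := H.exists_eq_aff hR₂ hR₂ℓ
    obtain ⟨-, m₁, -, -, -, hm₁⟩ := H.exists_tangent hx₁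
    obtain ⟨-, m₂, -, -, -, hm₂⟩ := H.exists_tangent hx₂
    rcases c.exists_dir T hTℓ with rfl | ⟨d, rfl⟩
    · obtain ⟨L, h₁, h₂⟩ := c.exists_line_inf x₁ (f x₁)
      have := hT₁ L h₁ h₂
      rw [H.nsec_of_inf h₁ h₂] at this
      lia
    have hcount : ∀ x, (∀ L : PGLine F, pgMem (c.aff x (f x)) L → pgMem (c.dir d) L →
        3 ≤ nsec (S ∪ {N}) L) → 2 ≤ (slopePoly f x).roots.count d := by
      intro x hx
      obtain ⟨L, h₁, h₂⟩ := c.exists_line_dir x (f x) d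
      exact H.two_le_count_of_three_le_nsec h₁ h₂ (hx L h₁ h₂)
    obtain rfl := hm₁.eq_of_two_le_count hm₂ H.injective hane (hcount x₁ hT₁) (hcount x₂ hT₂)
    exact hkey x₁ x₂ (hm₁.slopePoly_eq hm₂ H.injective)
  · rintro R₁ hR₁ R₂ hR₂ hR₁ℓ hR₂ℓ ⟨t₁, t₂, hRt₁, ht₁, hRt₂, ht₂, X, hXt₁, hXt₂, hXℓ⟩
    obtain ⟨x₁, hx₁, rfl⟩ := H.exists_eq_aff hR₁ hR₁ℓ
    obtain ⟨x₂, hx₂, rfl⟩ := H.exists_eq_aff hR₂ hR₂ℓ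
    obtain ⟨m₁, hmt₁, hm₁⟩ := H.exists_isTangentDir hx₁ hRt₁ ht₁
    obtain ⟨m₂, hmt₂, hm₂⟩ := H.exists_isTangentDir hx₂ hRt₂ ht₂
    have e₁ := point_unique (c.ne_of_aff_mem hRt₁) hXt₁ hXℓ hmt₁ (c.dir_mem m₁)
    have e₂ := point_unique (c.ne_of_aff_mem hRt₂) hXt₂ hXℓ hmt₂ (c.dir_mem m₂)
    obtain rfl := c.dir_injective (e₁.symm.trans e₂)
    exact hkey x₁ x₂ (hm₁.slopePoly_eq hm₂ H.injective)
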